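/- Let T = (G, P, L) be a canvas where P is a path of length one contained in the boundary C of the outer face of G. If 𝒞 is a non-empty collection of proper L-colorings of P, and P' is an edge of G with both ends in C, then Φ_T(P', 𝒞) is non-empty. -/

import Mathlib

/-!
Common definitions: plane graphs (given by a concrete embedding in the plane),
outer face, canvases, list colorings, governments, harmonicas and coloring
harmonicas, following Postle–Thomas,
"Five-list-coloring graphs on surfaces III".
-/

open Set

universe u

/-- A finite simple graph together with an embedding in the plane:
each vertex gets a point, each edge a simple arc joining its endpoints;
arcs avoid other vertices, and two distinct edges meet only in common
endpoints. -/
structure PlaneGraph (V : Type u) where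
  verts : Set V
  Adj : V → V → Prop
  finite_verts : verts.Finite
  adj_symm : ∀ u v, Adj u v → Adj v u
  adj_irrefl : ∀ v, ¬Adj v v
  adj_mem : ∀ u v, Adj u v → u ∈ verts
  pos : V → ℝ × ℝ
  arc : Sym2 V → Set (ℝ × ℝ)
  pos_injOn : Set.InjOn pos verts
  arc_arc : ∀ u v, Adj u v → ∃ f : ℝ → ℝ × ℝ,
    ContinuousOn f (Set.Icc 0 1) ∧ Set.InjOn f (Set.Icc 0 1) ∧
    f '' Set.Icc 0 1 = arc s(u, v) ∧ f 0 = pos u ∧ f 1 = pos v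
  arc_avoid : ∀ u v, Adj u v → ∀ w ∈ verts, pos w ∈ arc s(u, v) → w = u ∨ w = v
  arc_meet : ∀ u v x y, Adj u v → Adj x y → s(u, v) ≠ s(x, y) →
    arc s(u, v) ∩ arc s(x, y) ⊆ pos '' (({u, v} : Set V) ∩ ({x, y} : Set V))

namespace PlaneGraph

variable {V : Type u}

/-- The point set of the drawing of the plane graph. -/
def image (G : PlaneGraph V) : Set (ℝ × ℝ) :=
  G.pos '' G.verts ∪ ⋃ (u : V) (v : V) (_ : G.Adj u v), G.arc s(u, v)

/-- The outer (unbounded) face of the drawing. -/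
def outerFace (G : PlaneGraph V) : Set (ℝ × ℝ) :=
  {p | p ∉ G.image ∧ ¬Bornology.IsBounded (connectedComponentIn G.imageᶜ p)}

/-- A vertex incident with (i.e. on the boundary of) the outer face. -/
def OnOuter (G : PlaneGraph V) (v : V) : Prop := G.pos v ∈ frontier G.outerFace

/-- An edge incident with (i.e. on the boundary of) the outer face. -/
def EdgeOnOuter (G : PlaneGraph V) (u v : V) : Prop :=
  G.arc s(u, v) ⊆ frontier G.outerFace

/-- The vertices of the boundary of the outer face. -/
def boundaryVerts (G : PlaneGraph V) : Set V := {v | v ∈ G.verts ∧ G.OnOuter v}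

/-- Connectivity of a plane graph. -/
def Connected (G : PlaneGraph V) : Prop :=
  G.verts.Nonempty ∧ ∀ u ∈ G.verts, ∀ v ∈ G.verts, Relation.ReflTransGen G.Adj u v

/-- `H` is a (plane) subgraph of `G`, drawn the same way. -/
def IsSubgraph (H G : PlaneGraph V) : Prop :=
  H.verts ⊆ G.verts ∧ (∀ u v, H.Adj u v → G.Adj u v) ∧
  (∀ v ∈ H.verts, H.pos v = G.pos v) ∧
  (∀ u v, H.Adj u v → H.arc s(u, v) = G.arc s(u, v))

/-- Delete a set of vertices (and all incident edges) from a plane graph. -/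
def deleteVerts (G : PlaneGraph V) (s : Set V) : PlaneGraph V where
  verts := G.verts \ s
  Adj u v := G.Adj u v ∧ u ∉ s ∧ v ∉ s
  finite_verts := G.finite_verts.subset Set.diff_subset
  adj_symm := fun u v h => ⟨G.adj_symm u v h.1, h.2.2, h.2.1⟩
  adj_irrefl := fun v h => G.adj_irrefl v h.1
  adj_mem := fun u v h => ⟨G.adj_mem u v h.1, h.2.1⟩
  pos := G.pos
  arc := G.arc
  pos_injOn := G.pos_injOn.mono Set.diff_subset
  arc_arc := fun u v h => G.arc_arc u v h.1
  arc_avoid := fun u v h w hw hm => G.arc_avoid u v h.1 w hw.1 hm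
  arc_meet := fun u v x y h h' hne => G.arc_meet u v x y h.1 h'.1 hne

/-- `G` has a proper coloring from the lists `L`. -/
def HasLColoring (G : PlaneGraph V) (L : V → Finset ℕ) : Prop :=
  ∃ φ : V → ℕ, (∀ v ∈ G.verts, φ v ∈ L v) ∧ ∀ u v, G.Adj u v → φ u ≠ φ v

/-- A vertex of degree exactly one. -/
def DegreeOne (G : PlaneGraph V) (x : V) : Prop :=
  (∃ a, G.Adj x a) ∧ ∀ a b, G.Adj x a → G.Adj x b → a = b

end PlaneGraph

/-- The cyclic successor of an index in a list. -/
def cycNext {V : Type u} (C : List V) (i : Fin C.length) : Fin C.length :=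
  ⟨((i : ℕ) + 1) % C.length, Nat.mod_lt _ (lt_of_le_of_lt (Nat.zero_le _) i.isLt)⟩

/-- The list `C` is a cycle of `G` whose image is exactly the boundary of the
outer face of `G`; i.e. `G` is a plane graph with outer cycle `C`. -/
def PlaneGraph.IsOuterCycle {V : Type u} (G : PlaneGraph V) (C : List V) : Prop :=
  C.Nodup ∧ 3 ≤ C.length ∧ (∀ v ∈ C, v ∈ G.verts) ∧
  (∀ i : Fin C.length, G.Adj (C.get i) (C.get (cycNext C i))) ∧
  frontier G.outerFace =
    G.pos '' {v | v ∈ C} ∪ ⋃ i : Fin C.length, G.arc s(C.get i, C.get (cycNext C i))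

/-- `pq` is an edge of the cycle (given as a list) `C`. -/
def IsCycleEdge {V : Type u} (C : List V) (p q : V) : Prop :=
  ∃ i : Fin C.length, s(p, q) = s(C.get i, C.get (cycNext C i))

/-- `(G, S, L)` is a canvas, where the subgraph `S` of the boundary of the
outer face of `G` is given by its vertex set `Sverts` and adjacency `SAdj`. -/
structure IsCanvas {V : Type u} (G : PlaneGraph V) (Sverts : Set V) (SAdj : V → V → Prop)
    (L : V → Finset ℕ) : Prop where
  sadj_symm : ∀ u v, SAdj u v → SAdj v u
  sadj_sub : ∀ u v, SAdj u v → G.Adj u v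
  sadj_mem : ∀ u v, SAdj u v → u ∈ Sverts
  sverts_sub : Sverts ⊆ G.verts
  sverts_outer : ∀ v ∈ Sverts, G.OnOuter v
  sedges_outer : ∀ u v, SAdj u v → G.EdgeOnOuter u v
  lists_nonempty : ∀ v ∈ G.verts, (L v).Nonempty
  card_inner : ∀ v ∈ G.verts, ¬G.OnOuter v → 5 ≤ (L v).card
  card_outside_S : ∀ v ∈ G.verts, v ∉ Sverts → 3 ≤ (L v).card
  scolorable : ∃ φ : V → ℕ, (∀ v ∈ Sverts, φ v ∈ L v) ∧ ∀ u v, SAdj u v → φ u ≠ φ v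

/-- The adjacency relation of the single-edge path `p₁p₂`. -/
def pathAdj {V : Type u} (p1 p2 : V) : V → V → Prop :=
  fun u v => (u = p1 ∧ v = p2) ∨ (u = p2 ∧ v = p1)

/-- `(G, P, L)` is a canvas whose precolored subgraph is a path `P = p₁p₂` of
length one (in the boundary of the outer face of `G`). -/
def IsPathCanvas {V : Type u} (G : PlaneGraph V) (p1 p2 : V) (L : V → Finset ℕ) : Prop :=
  p1 ≠ p2 ∧ IsCanvas G {p1, p2} (pathAdj p1 p2) L

/-- `c = (c₁, c₂)` is a proper `L`-coloring of the edge `p₁p₂`. -/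
def ProperEdgeColoring {V : Type u} (L : V → Finset ℕ) (p1 p2 : V) (c : ℕ × ℕ) : Prop :=
  c.1 ∈ L p1 ∧ c.2 ∈ L p2 ∧ c.1 ≠ c.2

/-- `Φ_T(P', 𝒞)`: the colorings of the edge `q₁q₂` extendable to an `L`-coloring
of `G` whose restriction to `p₁p₂` lies in `C`. -/
def Phi {V : Type u} (G : PlaneGraph V) (L : V → Finset ℕ) (p1 p2 q1 q2 : V)
    (C : Set (ℕ × ℕ)) : Set (ℕ × ℕ) :=
  {c | ∃ φ : V → ℕ, (∀ v ∈ G.verts, φ v ∈ L v) ∧ (∀ u v, G.Adj u v → φ u ≠ φ v) ∧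
    (φ p1, φ p2) ∈ C ∧ φ q1 = c.1 ∧ φ q2 = c.2}

/-- The set of colors used on the first vertex of the path. -/
def fstColors (C : Set (ℕ × ℕ)) : Set ℕ := Prod.fst '' C

/-- The set of colors used on the second vertex of the path. -/
def sndColors (C : Set (ℕ × ℕ)) : Set ℕ := Prod.snd '' C

/-- A dictatorship: at least two (distinct) colorings, all agreeing on one of
the two vertices (the dictator). -/
def IsDictatorship (C : Set (ℕ × ℕ)) : Prop :=
  (∃ c ∈ C, ∃ d ∈ C, c ≠ d) ∧
  ((∃ a, ∀ c ∈ C, c.1 = a) ∨ (∃ a, ∀ c ∈ C, c.2 = a))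

/-- A democracy: exactly the two colorings `(x, y)` and `(y, x)`. -/
def IsDemocracy (C : Set (ℕ × ℕ)) : Prop :=
  ∃ x y : ℕ, x ≠ y ∧ C = {(x, y), (y, x)}

/-- A government is a dictatorship or a democracy. -/
def IsGovernment (C : Set (ℕ × ℕ)) : Prop := IsDictatorship C ∨ IsDemocracy C

/-- A confederacy: not a government, but the union of two governments. -/
def IsConfederacy (C : Set (ℕ × ℕ)) : Prop :=
  ¬IsGovernment C ∧ ∃ C1 C2 : Set (ℕ × ℕ), IsGovernment C1 ∧ IsGovernment C2 ∧ C = C1 ∪ C2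

/-- The canvas `(G, p₁p₂, L)` is a harmonica from the path `p₁p₂` to the path
`q₁q₂` with government `C`. -/
inductive IsHarmonica {V : Type u} (L : V → Finset ℕ) :
    PlaneGraph V → V → V → V → V → Set (ℕ × ℕ) → Prop where
  /-- Rule (i): `G = P = P'`. -/
  | same (G : PlaneGraph V) (p1 p2 q1 q2 : V) (C : Set (ℕ × ℕ))
      (hcanvas : IsPathCanvas G p1 p2 L)
      (hproper : ∀ c ∈ C, ProperEdgeColoring L p1 p2 c)
      (hgov : IsGovernment C)
      (hq : (q1 = p1 ∧ q2 = p2) ∨ (q1 = p2 ∧ q2 = p1))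
      (hverts : G.verts = {p1, p2})
      (hedges : ∀ u v, G.Adj u v → pathAdj p1 p2 u v) :
      IsHarmonica L G p1 p2 q1 q2 C
  /-- Rule (ii): `C` is a dictatorship, `G = P ∪ P'`, `V(P) ∩ V(P') = {z}`
  where `z` is the dictator. -/
  | cherry (G : PlaneGraph V) (p1 p2 q1 q2 z : V) (C : Set (ℕ × ℕ))
      (hcanvas : IsPathCanvas G p1 p2 L)
      (hproper : ∀ c ∈ C, ProperEdgeColoring L p1 p2 c)
      (hdict : IsDictatorship C)
      (hq : q1 ≠ q2) (hqadj : G.Adj q1 q2) (hqout : G.EdgeOnOuter q1 q2)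
      (hverts : G.verts = {p1, p2, q1, q2})
      (hedges : ∀ u v, G.Adj u v → pathAdj p1 p2 u v ∨ pathAdj q1 q2 u v)
      (hz : (({p1, p2} : Set V) ∩ ({q1, q2} : Set V)) = {z})
      (hzdict : (z = p1 ∧ ∃ a, ∀ c ∈ C, c.1 = a) ∨ (z = p2 ∧ ∃ a, ∀ c ∈ C, c.2 = a)) :
      IsHarmonica L G p1 p2 q1 q2 C
  /-- Rule (iii): `C` is a dictatorship with dictator `z ∈ V(P)` in color `c`,
  sitting on a triangle `z u₁ u₂`. -/
  | dict (G : PlaneGraph V) (p1 p2 q1 q2 z w u1 u2 : V) (c : ℕ) (L0 : Finset ℕ)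
      (C C' : Set (ℕ × ℕ))
      (hcanvas : IsPathCanvas G p1 p2 L)
      (hproper : ∀ d ∈ C, ProperEdgeColoring L p1 p2 d)
      (hdict : IsDictatorship C)
      (hq : q1 ≠ q2) (hqadj : G.Adj q1 q2) (hqout : G.EdgeOnOuter q1 q2)
      (hz : (z = p1 ∧ w = p2 ∧ (∀ d ∈ C, d.1 = c) ∧
              (u1 = w → sndColors C = (L0 : Set ℕ)) ∧
              (u2 = w → sndColors C = (L0 : Set ℕ))) ∨
            (z = p2 ∧ w = p1 ∧ (∀ d ∈ C, d.2 = c) ∧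
              (u1 = w → fstColors C = (L0 : Set ℕ)) ∧
              (u2 = w → fstColors C = (L0 : Set ℕ))))
      (hzu1 : G.Adj z u1) (hzu2 : G.Adj z u2) (hu12 : G.Adj u1 u2)
      (hL0 : L0.card = 2)
      (hLu1 : u1 ∉ ({p1, p2} : Set V) → L u1 = L0 ∪ {c})
      (hLu2 : u2 ∉ ({p1, p2} : Set V) → L u2 = L0 ∪ {c})
      (hu1P : u1 ∈ ({p1, p2} : Set V) → u1 = w)
      (hu2P : u2 ∈ ({p1, p2} : Set V) → u2 = w)
      (hdem : IsDemocracy C')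
      (hC'1 : fstColors C' = (L0 : Set ℕ)) (hC'2 : sndColors C' = (L0 : Set ℕ))
      (hrec : IsHarmonica L (G.deleteVerts (({p1, p2} : Set V) \ {u1, u2})) u1 u2 q1 q2 C') :
      IsHarmonica L G p1 p2 q1 q2 C
  /-- Rule (iv), with `i = 1`: `C` is a democracy, `z` is a common neighbor of
  `p₁, p₂`, and `p₁` is deleted. -/
  | demo1 (G : PlaneGraph V) (p1 p2 q1 q2 z : V) (a b c : ℕ) (L0 : Finset ℕ)
      (C C' : Set (ℕ × ℕ))
      (hcanvas : IsPathCanvas G p1 p2 L)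
      (hproper : ∀ d ∈ C, ProperEdgeColoring L p1 p2 d)
      (hdemC : IsDemocracy C)
      (hq : q1 ≠ q2) (hqadj : G.Adj q1 q2) (hqout : G.EdgeOnOuter q1 q2)
      (hz1 : G.Adj z p1) (hz2 : G.Adj z p2)
      (hLz : L z = L0 ∪ {c})
      (hC1 : fstColors C = (L0 : Set ℕ)) (hC2 : sndColors C = (L0 : Set ℕ))
      (hab : a ≠ b) (hL0ab : (L0 : Set ℕ) = {a, b})
      (hC' : C' = {(c, a), (c, b)})
      (hrec : IsHarmonica L (G.deleteVerts {p1}) z p2 q1 q2 C') :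
      IsHarmonica L G p1 p2 q1 q2 C
  /-- Rule (iv), with `i = 2`: `C` is a democracy, `z` is a common neighbor of
  `p₁, p₂`, and `p₂` is deleted. -/
  | demo2 (G : PlaneGraph V) (p1 p2 q1 q2 z : V) (a b c : ℕ) (L0 : Finset ℕ)
      (C C' : Set (ℕ × ℕ))
      (hcanvas : IsPathCanvas G p1 p2 L)
      (hproper : ∀ d ∈ C, ProperEdgeColoring L p1 p2 d)
      (hdemC : IsDemocracy C)
      (hq : q1 ≠ q2) (hqadj : G.Adj q1 q2) (hqout : G.EdgeOnOuter q1 q2)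
      (hz1 : G.Adj z p1) (hz2 : G.Adj z p2)
      (hLz : L z = L0 ∪ {c})
      (hC1 : fstColors C = (L0 : Set ℕ)) (hC2 : sndColors C = (L0 : Set ℕ))
      (hab : a ≠ b) (hL0ab : (L0 : Set ℕ) = {a, b})
      (hC' : C' = {(c, a), (c, b)})
      (hrec : IsHarmonica L (G.deleteVerts {p2}) z p1 q1 q2 C') :
      IsHarmonica L G p1 p2 q1 q2 C

/-- `(G, L)` is a coloring harmonica from `uv` to `w` (source `Sum.inr (u, v)`)
or from `u` to `w` (source `Sum.inl u`). -/
inductive IsColoringHarmonica {V : Type u} [DecidableEq V] :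
    PlaneGraph V → (V → Finset ℕ) → V ⊕ V × V → V → Prop where
  /-- `G` is a triangle with vertex set `{u, v, w}`, `L(u) = L(v) = L(w)` and
  `|L(u)| = 2`. -/
  | tri (G : PlaneGraph V) (L : V → Finset ℕ) (u v w : V)
      (hconn : G.Connected) (huv : u ≠ v) (huw : u ≠ w) (hvw : v ≠ w)
      (hu : G.OnOuter u) (hv : G.OnOuter v) (hw : G.OnOuter w)
      (huvout : G.EdgeOnOuter u v)
      (hverts : G.verts = {u, v, w})
      (hadjuv : G.Adj u v) (hadjvw : G.Adj v w) (hadjuw : G.Adj u w)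
      (hLuv : L u = L v) (hLvw : L v = L w) (hcard : (L u).card = 2) :
      IsColoringHarmonica G L (Sum.inr (u, v)) w
  /-- There is a triangle `uvz` on the outer face; delete one or both of
  `u, v` and recurse from `z`. -/
  | step (G : PlaneGraph V) (L : V → Finset ℕ) (u v w z : V) (s : Set V)
      (hconn : G.Connected) (huv : u ≠ v) (huw : u ≠ w) (hvw : v ≠ w)
      (hu : G.OnOuter u) (hv : G.OnOuter v) (hw : G.OnOuter w)
      (huvout : G.EdgeOnOuter u v)
      (hadjuv : G.Adj u v) (hadjuz : G.Adj u z) (hadjvz : G.Adj v z)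
      (hz : G.OnOuter z)
      (hLuv : L u = L v) (hsub : L u ⊆ L z)
      (hcardu : (L u).card = 2) (hcardz : (L z).card = 3)
      (hs : s = {u} ∨ s = {v} ∨ s = ({u, v} : Set V))
      (hrec : IsColoringHarmonica (G.deleteVerts s)
        (Function.update L z (L z \ L u)) (Sum.inl z) w) :
      IsColoringHarmonica G L (Sum.inr (u, v)) w
  /-- `|L(u)| = 1`, `u` sits on a triangle `uxy`; delete `u` and recurse
  from `xy`. -/
  | vert (G : PlaneGraph V) (L : V → Finset ℕ) (u w x y : V)
      (hconn : G.Connected) (huw : u ≠ w)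
      (hu : G.OnOuter u) (hw : G.OnOuter w)
      (hx : G.OnOuter x) (hy : G.OnOuter y)
      (hadjux : G.Adj u x) (hadjuy : G.Adj u y) (hadjxy : G.Adj x y)
      (hcardu : (L u).card = 1)
      (hLxy : L x \ L u = L y \ L u) (hcardx : (L x \ L u).card = 2)
      (hrec : IsColoringHarmonica (G.deleteVerts {u})
        (Function.update (Function.update L x (L x \ L u)) y (L y \ L u))
        (Sum.inr (x, y)) w) :
      IsColoringHarmonica G L (Sum.inl u) w

/-- `(G, L)` contains a coloring harmonica `(H, L')` with the given source and
target: `H` is a subgraph of `G` and `L'` agrees with `L` on `V(H)`. -/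
def ContainsColoringHarmonica {V : Type u} [DecidableEq V] (G : PlaneGraph V)
    (L : V → Finset ℕ) (st : V ⊕ V × V) (w : V) : Prop :=
  ∃ (H : PlaneGraph V) (L' : V → Finset ℕ), H.IsSubgraph G ∧
    (∀ x ∈ H.verts, L' x = L x) ∧ IsColoringHarmonica H L' st w

/-- `v` is a cutvertex of the boundary of the outer face of `G`. -/
def BoundaryCutvertex {V : Type u} (G : PlaneGraph V) (v : V) : Prop :=
  ∃ a b : V, a ∈ G.boundaryVerts ∧ b ∈ G.boundaryVerts ∧ a ≠ v ∧ b ≠ v ∧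
    Relation.ReflTransGen (fun x y => G.Adj x y ∧ G.EdgeOnOuter x y) a b ∧
    ¬Relation.ReflTransGen
      (fun x y => G.Adj x y ∧ G.EdgeOnOuter x y ∧ x ≠ v ∧ y ≠ v) a b

open Classical in
/-- The list assignment of the democratic reduction `T(P, L0, x)`:
remove the colors of `L0` from the list of `x` and from the lists of all
neighbors of `P` other than `y`. -/
noncomputable def reducedL {V : Type u} (G : PlaneGraph V) (L : V → Finset ℕ)
    (L0 : Finset ℕ) (Q : List V) (x y : V) : V → Finset ℕ := fun w =>
  if w = x ∨ (w ≠ y ∧ ∃ p ∈ Q, G.Adj w p) then L w \ L0 else L w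

/-- The vertex set of the precolored subgraph of the democratic reduction:
`S ∖ V(P)`, together with `x` as an isolated vertex if its new list is
smaller than 3. -/
def reducedSverts {V : Type u} (Sverts : Set V) (Q : List V) (x : V)
    (L' : V → Finset ℕ) : Set V :=
  {v | (v ∈ Sverts ∧ v ∉ Q) ∨ (v = x ∧ (L' x).card < 3)}

/-- The adjacency of the precolored subgraph of the democratic reduction:
`S ∖ V(P)`. -/
def reducedSAdj {V : Type u} (SAdj : V → V → Prop) (Q : List V) : V → V → Prop :=
  fun u v => SAdj u v ∧ u ∉ Q ∧ v ∉ Q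

/-!
An apex placed in the outer face is joined to all boundary vertices. Each of its edges is drawn as
the outer face together with a small disc, so only connectedness of that face is needed, and the
drawing is weak: edges are connected sets, and only independent ones are disjoint. There is no weak
drawing of `K₅` in the plane, by a parity argument: for two disjoint curves, the turns that each of
them makes around the ends of the other are related by the increments of `log (γ t - δ u)` along the
boundary of a square, and these relations for the 15 pairs of independent edges are inconsistent
modulo 2.

The absence of a weak model of `K₅` is all that Thomassen's induction needs of planarity. Deleted
vertices join the apex. A boundary vertex `v` next to a precolored vertex either has at most one
further boundary neighbor, and is deleted after two of its colors have been reserved, or has three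
boundary neighbors. In the latter case, if no chord at `v` separates the canvas, then the apex, `v`
and the three neighbors are the branch vertices of a weak model of `K₅`.
-/

section Logarithms

theorem exists_continuous_log {A : Type*} [TopologicalSpace A] [SimplyConnectedSpace A]
    [LocallyPathConnectedSpace A] {f : A → ℂ} (hf : Continuous f) (h0 : ∀ a, f a ≠ 0) :
    ∃ g : A → ℂ, Continuous g ∧ ∀ a, Complex.exp (g a) = f a := by
  obtain ⟨a₀⟩ : Nonempty A := inferInstance
  obtain ⟨g, ⟨-, hg⟩, -⟩ :=
    Complex.isCoveringMapOn_exp.existsUnique_continuousMap_lifts (⟨f, hf⟩ : C(A, ℂ))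
      (a₀ := a₀) (e₀ := Complex.log (f a₀)) (Complex.exp_log (h0 a₀)) (fun a => by simpa using h0 a)
  exact ⟨g, g.continuous, congrFun hg⟩

theorem eq_of_continuous_of_exp_eq {A : Type*} [TopologicalSpace A] [PreconnectedSpace A]
    {g : A → ℂ} (hg : Continuous g) {c : ℂ} (h : ∀ a, Complex.exp (g a) = c) (a b : A) :
    g a = g b := by
  have hlift : (fun z ↦ ⟨_, Complex.exp_ne_zero z⟩ : ℂ → {z : ℂ // z ≠ 0}) ∘ g =
      (fun z ↦ ⟨_, Complex.exp_ne_zero z⟩) ∘ fun _ => g b :=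
    funext fun a => Subtype.ext ((h a).trans (h b).symm)
  exact congrFun (Complex.isCoveringMap_exp.eq_of_comp_eq hg continuous_const hlift b rfl) a

/-- The increment over `[0, 1]` of a continuous logarithm of the non-vanishing continuous function
`f`; for a closed curve `f` this is `2πi` times its winding number around the origin. -/
noncomputable def logIncrement (f : ℝ → ℂ) : ℂ :=
  let g := Classical.epsilon fun g : ℝ → ℂ => Continuous g ∧ ∀ t, Complex.exp (g t) = f t
  g 1 - g 0

theorem logIncrement_eq {f g : ℝ → ℂ} {c : ℂ} (hg : Continuous g) (hc : c ≠ 0)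
    (h : ∀ t, Complex.exp (g t) = c * f t) : logIncrement f = g 1 - g 0 := by
  have hlog : ∃ k : ℝ → ℂ, Continuous k ∧ ∀ t, Complex.exp (k t) = f t := by
    refine ⟨fun t => g t - Complex.log c, by fun_prop, fun t => ?_⟩
    rw [Complex.exp_sub, h, Complex.exp_log hc, mul_div_cancel_left₀ _ hc]
  obtain ⟨hcont, hexp⟩ := Classical.epsilon_spec hlog
  have hf : ∀ t, f t ≠ 0 := fun t => by rw [← hexp t]; exact Complex.exp_ne_zero _
  have hconst := eq_of_continuous_of_exp_eq (hg.sub hcont) (c := c)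
    (fun t => by rw [Pi.sub_apply, Complex.exp_sub, h, hexp, mul_div_cancel_right₀ _ (hf t)]) 1 0
  simp only [Pi.sub_apply] at hconst
  rw [logIncrement]
  linear_combination -hconst

theorem exists_int_logIncrement_eq {f : ℝ → ℂ} (hf : Continuous f) (hf0 : ∀ t, f t ≠ 0)
    {z w : ℂ} (hz : Complex.exp z = f 0) (hw : Complex.exp w = f 1) :
    ∃ n : ℤ, logIncrement f = w - z + n * (2 * Real.pi * Complex.I) := by
  obtain ⟨g, hg, hgf⟩ := exists_continuous_log hf hf0
  obtain ⟨m, hm⟩ := Complex.exp_eq_exp_iff_exists_int.1 ((hgf 0).trans hz.symm)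
  obtain ⟨n, hn⟩ := Complex.exp_eq_exp_iff_exists_int.1 ((hgf 1).trans hw.symm)
  refine ⟨n - m, ?_⟩
  rw [logIncrement_eq hg one_ne_zero (by simpa using hgf), hm, hn]
  push_cast
  ring

-- Both sides are the increment of `log (γ t - δ u)` from `(0, 0)` to `(1, 1)` along the two ways
-- around the boundary of the unit square.
theorem logIncrement_exchange {γ δ : ℝ → ℂ} (hγ : Continuous γ) (hδ : Continuous δ)
    (h : ∀ t u, γ t ≠ δ u) :
    logIncrement (fun t => γ t - δ 0) + logIncrement (fun u => δ u - γ 1) =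
      logIncrement (fun u => δ u - γ 0) + logIncrement (fun t => γ t - δ 1) := by
  obtain ⟨g, hg, hgexp⟩ := exists_continuous_log (A := ℝ × ℝ) (f := fun p => γ p.1 - δ p.2)
    (by fun_prop) (fun p => sub_ne_zero.2 (h p.1 p.2))
  have hγδ (u : ℝ) : logIncrement (fun t => γ t - δ u) = g (1, u) - g (0, u) :=
    logIncrement_eq (g := fun t => g (t, u)) (by fun_prop) one_ne_zero (by simp [hgexp])
  have hδγ (t : ℝ) : logIncrement (fun u => δ u - γ t) = g (t, 1) - g (t, 0) :=
    logIncrement_eq (g := fun u => g (t, u)) (c := -1) (by fun_prop) (by simp) (by simp [hgexp])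
  rw [hγδ, hγδ, hδγ, hδγ]
  ring

end Logarithms
section WeakDrawings

variable {V Y Z : Type*} [TopologicalSpace Y] [TopologicalSpace Z]

/-- A weak drawing of a graph in a space: vertices become points, edges become sets joining the
points of their ends. Only the sets of *independent* edges have to be disjoint; they need not be
arcs, and adjacent edges may intersect arbitrarily. -/
structure WeakDrawing (G : SimpleGraph V) (Y : Type*) [TopologicalSpace Y] where
  pos : V → Y
  arc : V → V → Set Y
  joined : ∀ {u v}, G.Adj u v → JoinedIn (arc u v) (pos u) (pos v)
  disjoint : ∀ {u v x y}, G.Adj u v → G.Adj x y → u ≠ x → u ≠ y → v ≠ x → v ≠ y →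
    Disjoint (arc u v) (arc x y)

namespace WeakDrawing

variable {G : SimpleGraph V}

/-- The image of a weak drawing under an injective continuous map. -/
def map (D : WeakDrawing G Y) (f : Y → Z) (hf : Continuous f)
    (hinj : Function.Injective f) : WeakDrawing G Z where
  pos v := f (D.pos v)
  arc u v := f '' D.arc u v
  joined h := (D.joined h).map hf
  disjoint h h' h₁ h₂ h₃ h₄ := (disjoint_image_iff hinj).2 (D.disjoint h h' h₁ h₂ h₃ h₄)

theorem pos_notMem_arc (D : WeakDrawing G Y) {a b v d : V} (hab : G.Adj a b) (hvd : G.Adj v d)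
    (hva : v ≠ a) (hvb : v ≠ b) (hda : d ≠ a) (hdb : d ≠ b) : D.pos v ∉ D.arc a b :=
  disjoint_left.1 (D.disjoint hvd hab hva hvb hda hdb) (D.joined hvd).source_mem

theorem pos_notMem_arc_of_top (D : WeakDrawing (⊤ : SimpleGraph V) Y)
    (hV : ∀ a b c : V, ∃ d, d ≠ a ∧ d ≠ b ∧ d ≠ c) {v a b : V} (hab : a ≠ b) (hva : v ≠ a)
    (hvb : v ≠ b) : D.pos v ∉ D.arc a b := by
  obtain ⟨d, hdv, hda, hdb⟩ := hV v a b
  exact D.pos_notMem_arc hab hdv.symm hva hvb hda hdb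

theorem pos_injective (D : WeakDrawing (⊤ : SimpleGraph V) Y)
    (hV : ∀ a b c : V, ∃ d, d ≠ a ∧ d ≠ b ∧ d ≠ c) : Function.Injective D.pos := by
  intro a b hpos
  by_contra hab
  obtain ⟨d, hda, hdb, -⟩ := hV a b b
  exact D.pos_notMem_arc_of_top hV hda.symm (Ne.symm hab) hdb.symm
    (hpos ▸ (D.joined hda.symm).source_mem)

theorem exists_curves (D : WeakDrawing G Y) : ∃ γ : V → V → ℝ → Y, ∀ u v, G.Adj u v →
    Continuous (γ u v) ∧ γ u v 0 = D.pos u ∧ γ u v 1 = D.pos v ∧ ∀ t, γ u v t ∈ D.arc u v := by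
  have hcurve (u v : V) (h : G.Adj u v) : ∃ γ : ℝ → Y,
      Continuous γ ∧ γ 0 = D.pos u ∧ γ 1 = D.pos v ∧ ∀ t, γ t ∈ D.arc u v := by
    let γ := (D.joined h).somePath
    refine ⟨γ.extend, γ.continuous_extend, γ.extend_zero, γ.extend_one, fun t => ?_⟩
    obtain ⟨s, hs⟩ : γ.extend t ∈ range γ := γ.extend_range ▸ mem_range_self t
    exact hs ▸ (D.joined h).somePath_mem s
  classical
  refine ⟨fun u v => if h : G.Adj u v then (hcurve u v h).choose else fun _ => D.pos u,
    fun u v h => ?_⟩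
  simpa only [dif_pos h] using (hcurve u v h).choose_spec

end WeakDrawing

end WeakDrawings
section CompleteGraph

variable {ι : Type*} [LinearOrder ι]

/-- The sign recording the order of a pair, `-1` for `i < j` and `1` otherwise. -/
def orderSign (i j : ι) : ℤ := if i < j then -1 else 1

theorem orderSign_of_lt {i j : ι} (h : i < j) : orderSign i j = -1 := if_pos h

theorem orderSign_of_gt {i j : ι} (h : j < i) : orderSign i j = 1 := if_neg h.not_gt

theorem exists_log_sub {x : ι → ℂ} (hx : Function.Injective x) :
    ∃ l : ι → ι → ℂ, ∀ i j, i ≠ j → Complex.exp (l i j) = x i - x j ∧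
      l i j - l j i = orderSign i j * (Real.pi * Complex.I) := by
  refine ⟨fun i j => if i < j then Complex.log (x i - x j)
    else Complex.log (x j - x i) + Real.pi * Complex.I, fun i j hij => ?_⟩
  have hne {a b} (hab : a ≠ b) : x a - x b ≠ 0 := sub_ne_zero.2 (hx.ne hab)
  rcases hij.lt_or_gt with h | h
  · simp [h, h.not_gt, orderSign_of_lt, Complex.exp_log (hne hij)]
  · simp [h, h.not_gt, orderSign_of_gt, Complex.exp_add, Complex.exp_log (hne hij.symm)]

namespace WeakDrawing

-- `N v a b` counts the extra turns around `D.pos v` made by the curve from `D.pos a` to `D.pos b`,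
-- compared with the difference of fixed logarithms at the ends.
theorem exists_turns_exchange (D : WeakDrawing (⊤ : SimpleGraph ι) ℂ)
    (hι : ∀ a b c : ι, ∃ d, d ≠ a ∧ d ≠ b ∧ d ≠ c) :
    ∃ N : ι → ι → ι → ℤ, ∀ a b c d, a ≠ b → c ≠ d → a ≠ c → a ≠ d → b ≠ c → b ≠ d →
      2 * (N c a b + N b c d - N a c d - N d a b) =
        orderSign a c + orderSign c b + orderSign b d + orderSign d a := by
  obtain ⟨γ, hγ⟩ := D.exists_curves
  obtain ⟨l, hl⟩ := exists_log_sub (D.pos_injective hι)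
  have hturns (v a b : ι) : ∃ n : ℤ, a ≠ b → v ≠ a → v ≠ b →
      logIncrement (fun t => γ a b t - D.pos v) =
        l b v - l a v + n * (2 * Real.pi * Complex.I) := by
    by_cases h : a ≠ b ∧ v ≠ a ∧ v ≠ b
    · obtain ⟨hab, hva, hvb⟩ := h
      obtain ⟨hcont, h0, h1, hmem⟩ := hγ a b hab
      have havoid (t : ℝ) : γ a b t ≠ D.pos v := fun h =>
        D.pos_notMem_arc_of_top hι hab hva hvb (h ▸ hmem t)
      obtain ⟨n, hn⟩ := exists_int_logIncrement_eq (hcont.sub continuous_const)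
        (fun t => sub_ne_zero.2 (havoid t))
        ((hl a v hva.symm).1.trans (by rw [Pi.sub_apply, h0]))
        ((hl b v hvb.symm).1.trans (by rw [Pi.sub_apply, h1]))
      exact ⟨n, fun _ _ _ => hn⟩
    · exact ⟨0, fun hab hva hvb => absurd ⟨hab, hva, hvb⟩ h⟩
  choose N hN using hturns
  refine ⟨N, fun a b c d hab hcd hac had hbc hbd => ?_⟩
  obtain ⟨hcont₁, h₁0, h₁1, hmem₁⟩ := hγ a b hab
  obtain ⟨hcont₂, h₂0, h₂1, hmem₂⟩ := hγ c d hcd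
  have hexch := logIncrement_exchange hcont₁ hcont₂ fun t u h =>
    disjoint_left.1 (D.disjoint hab hcd hac had hbc hbd) (hmem₁ t) (h ▸ hmem₂ u)
  rw [h₁0, h₁1, h₂0, h₂1, hN c a b hab hac.symm hbc.symm, hN b c d hcd hbc hbd,
    hN a c d hcd hac had, hN d a b hab had.symm hbd.symm] at hexch
  have hpi : (Real.pi * Complex.I : ℂ) ≠ 0 := by simp [Real.pi_ne_zero]
  have hℂ : (2 * (N c a b + N b c d - N a c d - N d a b) : ℂ) =
      orderSign a c + orderSign c b + orderSign b d + orderSign d a := by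
    refine mul_right_cancel₀ hpi ?_
    linear_combination hexch + (hl a c hac).2 + (hl c b hbc.symm).2 + (hl b d hbd).2 +
      (hl d a had.symm).2
  exact_mod_cast hℂ

-- Among the three ways to split `{i, j, k, l}` into two pairs, only the interleaved one
-- contributes.
theorem exists_turns_quadruple (D : WeakDrawing (⊤ : SimpleGraph ι) ℂ)
    (hι : ∀ a b c : ι, ∃ d, d ≠ a ∧ d ≠ b ∧ d ≠ c) :
    ∃ N : ι → ι → ι → ℤ, ∀ i j k l, i < j → j < k → k < l →
      (N k i j + N j k l - N i k l - N l i j) + (N j i k + N k j l - N i j l - N l i k) +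
        (N j i l + N l j k - N i j k - N k i l) = -1 := by
  obtain ⟨N, hN⟩ := D.exists_turns_exchange hι
  refine ⟨N, fun i j k l hij hjk hkl => ?_⟩
  have hik := hij.trans hjk
  have hil := hik.trans hkl
  have hjl := hjk.trans hkl
  have hseparated := hN i j k l hij.ne hkl.ne hik.ne hil.ne hjk.ne hjl.ne
  have hinterleaved := hN i k j l hik.ne hjl.ne hij.ne hil.ne hjk.ne' hkl.ne
  have hnested := hN i l j k hil.ne hjk.ne hij.ne hik.ne hjl.ne' hkl.ne'
  simp only [orderSign_of_lt, orderSign_of_gt, *] at hseparated hinterleaved hnested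
  omega

-- In the sum of the relations for the five quadruples, every turn number has an even coefficient,
-- but the right-hand side is `-5`.
theorem isEmpty_top_fin_five : IsEmpty (WeakDrawing (⊤ : SimpleGraph (Fin 5)) ℂ) := by
  refine ⟨fun D => ?_⟩
  obtain ⟨N, hN⟩ := D.exists_turns_quadruple (by decide)
  have h₀ := hN 1 2 3 4 (by decide) (by decide) (by decide)
  have h₁ := hN 0 2 3 4 (by decide) (by decide) (by decide)
  have h₂ := hN 0 1 3 4 (by decide) (by decide) (by decide)
  have h₃ := hN 0 1 2 4 (by decide) (by decide) (by decide)
  have h₄ := hN 0 1 2 3 (by decide) (by decide) (by decide)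
  omega

end WeakDrawing

end CompleteGraph
section Links

variable {V Y : Type*} [TopologicalSpace Y] {G : SimpleGraph V} {A B : Set V} {u v w : V}

/-- The vertices `u` and `v` are the ends of a walk of `G` all of whose vertices lie in `A`. -/
def LinkedIn (G : SimpleGraph V) (A : Set V) (u v : V) : Prop :=
  ∃ p : G.Walk u v, ∀ x ∈ p.support, x ∈ A

namespace LinkedIn

theorem refl (hu : u ∈ A) : LinkedIn G A u u := ⟨.nil, by simpa using hu⟩

theorem of_adj (h : G.Adj u v) (hu : u ∈ A) (hv : v ∈ A) : LinkedIn G A u v :=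
  ⟨h.toWalk, by simp [hu, hv]⟩

theorem mono (hAB : A ⊆ B) : LinkedIn G A u v → LinkedIn G B u v :=
  fun ⟨p, hp⟩ => ⟨p, fun x hx => hAB (hp x hx)⟩

theorem symm : LinkedIn G A u v → LinkedIn G A v u :=
  fun ⟨p, hp⟩ => ⟨p.reverse, by simpa using hp⟩

theorem trans : LinkedIn G A u v → LinkedIn G A v w → LinkedIn G A u w :=
  fun ⟨p, hp⟩ ⟨q, hq⟩ => ⟨p.append q, fun x hx =>
    ((SimpleGraph.Walk.mem_support_append_iff _ _).1 hx).elim (hp x) (hq x)⟩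

theorem left_mem : LinkedIn G A u v → u ∈ A := fun ⟨p, hp⟩ => hp u p.start_mem_support

theorem right_mem (h : LinkedIn G A u v) : v ∈ A := h.symm.left_mem

end LinkedIn

/-- A weak topological model of `K₅` in `G`: five branch vertices, pairwise linked inside
prescribed vertex sets which are disjoint for independent pairs. Pairs `{i, j}` are represented by
`i < j`. -/
structure WeakK5 (G : SimpleGraph V) where
  branch : Fin 5 → V
  link : Fin 5 → Fin 5 → Set V
  linked : ∀ i j, i < j → LinkedIn G (link i j) (branch i) (branch j)
  disjoint : ∀ i j k l, i < j → k < l → i < k → j ≠ k → j ≠ l → Disjoint (link i j) (link k l)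

namespace WeakK5

/-- The set linking an unordered pair of branch vertices. -/
def pairLink (M : WeakK5 G) (i j : Fin 5) : Set V := M.link (min i j) (max i j)

theorem linkedIn_pairLink (M : WeakK5 G) {i j : Fin 5} (hij : i ≠ j) :
    LinkedIn G (M.pairLink i j) (M.branch i) (M.branch j) := by
  rcases hij.lt_or_gt with h | h
  · simpa [pairLink, h.le] using M.linked i j h
  · simpa [pairLink, h.le] using (M.linked j i h).symm

theorem disjoint_pairLink (M : WeakK5 G) {i j k l : Fin 5} (hij : i ≠ j) (hkl : k ≠ l)
    (hik : i ≠ k) (hil : i ≠ l) (hjk : j ≠ k) (hjl : j ≠ l) :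
    Disjoint (M.pairLink i j) (M.pairLink k l) := by
  rcases lt_or_gt_of_ne (show min i j ≠ min k l by grind) with h | h
  · exact M.disjoint _ _ _ _ (by grind) (by grind) h (by grind) (by grind)
  · exact (M.disjoint _ _ _ _ (by grind) (by grind) h (by grind) (by grind)).symm

theorem branch_injective (M : WeakK5 G) : Function.Injective M.branch := by
  intro i j hbranch
  by_contra hij
  have hpair : ∀ i j : Fin 5, ∃ k l, i ≠ k ∧ j ≠ l ∧ i ≠ l ∧ j ≠ k ∧ k ≠ l := by decide
  obtain ⟨k, l, hik, hjl, hil, hjk, hkl⟩ := hpair i j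
  exact disjoint_left.1 (M.disjoint_pairLink hik hjl hij hil hjk.symm hkl)
    (M.linkedIn_pairLink hik).left_mem (hbranch ▸ (M.linkedIn_pairLink hjl).left_mem)

end WeakK5

namespace WeakDrawing

/-- The part of a weak drawing formed by the edges with both ends in `A`. -/
def region (D : WeakDrawing G Y) (A : Set V) : Set Y :=
  ⋃ (u) (v) (_ : G.Adj u v ∧ u ∈ A ∧ v ∈ A), D.arc u v

theorem arc_subset_region (D : WeakDrawing G Y) (h : G.Adj u v) (hu : u ∈ A) (hv : v ∈ A) :
    D.arc u v ⊆ D.region A :=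
  fun _ hp => mem_iUnion₂.2 ⟨u, v, mem_iUnion.2 ⟨⟨h, hu, hv⟩, hp⟩⟩

theorem disjoint_region (D : WeakDrawing G Y) (hAB : Disjoint A B) :
    Disjoint (D.region A) (D.region B) := by
  simp only [region, disjoint_iUnion_left, disjoint_iUnion_right]
  rintro x y ⟨hxy, hx, hy⟩ u v ⟨huv, hu, hv⟩
  exact D.disjoint huv hxy (hAB.ne_of_mem hu hx) (hAB.ne_of_mem hu hy) (hAB.ne_of_mem hv hx)
    (hAB.ne_of_mem hv hy)

theorem joinedIn_region (D : WeakDrawing G Y) :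
    LinkedIn G A u v → u ≠ v → JoinedIn (D.region A) (D.pos u) (D.pos v) := by
  rintro ⟨p, hp⟩ huv
  induction p with
  | nil => exact absurd rfl huv
  | @cons u w v h q ih =>
    have hq : ∀ x ∈ q.support, x ∈ A := fun x hx => hp x (by simp [hx])
    have hstep : JoinedIn (D.region A) (D.pos u) (D.pos w) :=
      (D.joined h).mono (D.arc_subset_region h (hp u (by simp)) (hq w q.start_mem_support))
    rcases eq_or_ne w v with rfl | hwv
    · exact hstep
    · exact hstep.trans (ih hq hwv)

/-- A weak drawing of `G` restricts to one of `K₅` along every weak model of `K₅`. -/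
def ofWeakK5 (D : WeakDrawing G Y) (M : WeakK5 G) : WeakDrawing (⊤ : SimpleGraph (Fin 5)) Y where
  pos i := D.pos (M.branch i)
  arc i j := D.region (M.pairLink i j)
  joined hij := D.joinedIn_region (M.linkedIn_pairLink hij) (M.branch_injective.ne hij)
  disjoint hij hkl hik hil hjk hjl :=
    D.disjoint_region (M.disjoint_pairLink hij hkl hik hil hjk hjl)

theorem isEmpty_weakK5 (D : WeakDrawing G ℂ) : IsEmpty (WeakK5 G) :=
  ⟨fun M => isEmpty_top_fin_five.false (D.ofWeakK5 M)⟩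

end WeakDrawing

end Links
section ApexCanvases

variable {V α : Type*} {G : SimpleGraph V} {W X P : Set V} {L : V → Finset α} {v : V}

/-- The subgraph of `G` induced on `W` has a proper coloring from the lists `L`. -/
def ListColorableOn (G : SimpleGraph V) (W : Set V) (L : V → Finset α) : Prop :=
  ∃ ψ : V → α, (∀ x ∈ W, ψ x ∈ L x) ∧ ∀ x ∈ W, ∀ y ∈ W, G.Adj x y → ψ x ≠ ψ y

theorem ListColorableOn.mono {L' : V → Finset α} (hL : ∀ x ∈ W, L' x ⊆ L x) :
    ListColorableOn G W L' → ListColorableOn G W L :=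
  fun ⟨ψ, hψ, hproper⟩ => ⟨ψ, fun x hx => hL x hx (hψ x hx), hproper⟩

/-- The combinatorial content of a canvas on `G[W]` with boundary vertices `X` and precolored
clique `P`. Planarity enters only through the vertices outside `W`: they form a connected "apex"
seen from every boundary vertex, which stands for the outer face. Vertices deleted in the induction
join the apex. A precoloring is encoded by lists of size one. -/
structure ApexCanvas (G : SimpleGraph V) (W X P : Set V) (L : V → Finset α) : Prop where
  finite : W.Finite
  boundary_subset : X ⊆ W
  precolored_subset : P ⊆ X
  linked : ∃ s, ∀ x ∈ X, LinkedIn G (insert x Wᶜ) x s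
  isClique : G.IsClique P
  card_eq_one : ∀ p ∈ P, (L p).card = 1
  pairwiseDisjoint : P.PairwiseDisjoint L
  three_le_card : ∀ x ∈ X, x ∉ P → 3 ≤ (L x).card
  five_le_card : ∀ x ∈ W, x ∉ X → 5 ≤ (L x).card

/-- All canvases on proper subsets of `W` are colorable: the induction hypothesis of Thomassen's
argument. -/
def SmallerCanvasesColorable (G : SimpleGraph V) (α : Type*) (W : Set V) : Prop :=
  ∀ ⦃W' : Set V⦄, W' ⊂ W → ∀ ⦃X P : Set V⦄ ⦃L : V → Finset α⦄,
    ApexCanvas G W' X P L → ListColorableOn G W' L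

namespace ApexCanvas

theorem precolored_subset_verts (h : ApexCanvas G W X P L) : P ⊆ W :=
  h.precolored_subset.trans h.boundary_subset

theorem exists_nonempty_precolored (h : ApexCanvas G W X P L) (hW : W.Nonempty) :
    ∃ (X' P' : Set V) (L' : V → Finset α), ApexCanvas G W X' P' L' ∧ P'.Nonempty ∧
      ∀ x, L' x ⊆ L x := by
  classical
  rcases P.eq_empty_or_nonempty with rfl | hP
  swap
  · exact ⟨X, P, L, h, hP, fun x => subset_rfl⟩
  obtain ⟨X', v, hv, h'⟩ : ∃ (X' : Set V) (v : V), v ∈ X' ∧ ApexCanvas G W X' ∅ L := by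
    rcases X.eq_empty_or_nonempty with rfl | ⟨v, hv⟩
    · obtain ⟨v, hv⟩ := hW
      have hcard (x : V) (hx : x ∈ W) : 5 ≤ (L x).card := h.five_le_card x hx (notMem_empty x)
      exact ⟨{v}, v, rfl, {
        h with
        boundary_subset := singleton_subset_iff.2 hv
        linked := ⟨v, by rintro _ rfl; exact .refl (mem_insert _ _)⟩
        precolored_subset := empty_subset _
        three_le_card := by rintro _ rfl -; exact (hcard _ hv).trans' (by norm_num)
        five_le_card := fun x hx _ => hcard x hx }⟩
    · exact ⟨X, v, hv, h⟩
  obtain ⟨c, hc⟩ : (L v).Nonempty :=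
    Finset.card_pos.1 ((h'.three_le_card v hv (notMem_empty v)).trans' (by norm_num))
  refine ⟨X', {v}, Function.update L v {c}, {
    h' with
    precolored_subset := singleton_subset_iff.2 hv
    isClique := by simp
    card_eq_one := by simp
    pairwiseDisjoint := pairwiseDisjoint_singleton _ _
    three_le_card := fun x hx hxv => ?_
    five_le_card := fun x hx hxX => ?_ }, singleton_nonempty v, fun x => ?_⟩
  · rw [Function.update_of_ne hxv]
    exact h'.three_le_card x hx (notMem_empty x)
  · rw [Function.update_of_ne (ne_of_mem_of_not_mem hv hxX).symm]
    exact h'.five_le_card x hx hxX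
  · rcases eq_or_ne x v with rfl | hxv
    · simpa using hc
    · rw [Function.update_of_ne hxv]

open Classical in
/-- The lists left on `W \ {v}` when the colors of `R` are reserved for the boundary vertex `v`. -/
noncomputable def reserve (G : SimpleGraph V) (X : Set V) (L : V → Finset α) (v : V)
    (R : Finset α) (x : V) : Finset α :=
  if G.Adj v x ∧ x ∉ X then L x \ R else L x

theorem reserve_of_mem {R : Finset α} {x : V} (hx : x ∈ X) : reserve G X L v R x = L x :=
  if_neg fun h => h.2 hx

theorem reserve_subset {R : Finset α} (x : V) : reserve G X L v R x ⊆ L x := by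
  classical
  rw [reserve]
  split
  · exact Finset.sdiff_subset
  · exact subset_rfl

-- The neighbors of `v` become boundary vertices: `v` itself now belongs to the apex.
theorem delete (h : ApexCanvas G W X P L) (hv : v ∈ X) {R : Finset α} (hR : R.card ≤ 2) :
    ApexCanvas G (W \ {v}) {x ∈ W \ {v} | x ∈ X ∨ G.Adj v x} (P \ {v}) (reserve G X L v R) where
  finite := h.finite.sdiff
  boundary_subset := sep_subset _ _
  precolored_subset p hp :=
    ⟨⟨h.precolored_subset_verts hp.1, hp.2⟩, .inl (h.precolored_subset hp.1)⟩
  linked := by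
    obtain ⟨s, hs⟩ := h.linked
    have hmono (x : V) : insert x Wᶜ ⊆ insert x (W \ {v})ᶜ :=
      insert_subset_insert (compl_subset_compl.2 sdiff_subset)
    refine ⟨s, fun x hx => hx.2.elim (fun hxX => (hs x hxX).mono (hmono x)) fun hvx => ?_⟩
    have hvs : LinkedIn G (insert x (W \ {v})ᶜ) v s := (hs v hv).mono (insert_subset (by simp)
      ((subset_insert _ _).trans (hmono x)))
    exact (LinkedIn.of_adj hvx.symm (mem_insert x _) (by simp)).trans hvs
  isClique := h.isClique.subset sdiff_subset
  card_eq_one p hp := by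
    rw [reserve_of_mem (h.precolored_subset hp.1)]
    exact h.card_eq_one p hp.1
  pairwiseDisjoint := (h.pairwiseDisjoint.mono fun x => reserve_subset x).subset sdiff_subset
  three_le_card x hx hxP := by
    by_cases hxX : x ∈ X
    · rw [reserve_of_mem hxX]
      exact h.three_le_card x hxX fun hP => hxP ⟨hP, hx.1.2⟩
    · classical
      have hfive := h.five_le_card x hx.1.1 hxX
      have hsdiff := Finset.le_card_sdiff R (L x)
      rw [reserve, if_pos ⟨hx.2.resolve_left hxX, hxX⟩]
      omega
  five_le_card x hx hxX := by
    rw [reserve, if_neg fun hadj => hxX ⟨hx, .inr hadj.1⟩]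
    exact h.five_le_card x hx.1 fun hX => hxX ⟨hx, .inl hX⟩

theorem listColorableOn_of_delete (h : ApexCanvas G W X P L)
    (ih : SmallerCanvasesColorable G α W) (hv : v ∈ X) {R : Finset α} (hR : R.card ≤ 2)
    (hRL : R ⊆ L v) (hfree : ∀ ψ : V → α, (∀ x ∈ X, x ≠ v → ψ x ∈ L x) →
      ∃ c ∈ R, ∀ x ∈ X, G.Adj v x → ψ x ≠ c) : ListColorableOn G W L := by
  classical
  have hvW := h.boundary_subset hv
  obtain ⟨ψ, hψL, hψ⟩ := ih (sdiff_singleton_ssubset.2 hvW) (h.delete hv hR)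
  obtain ⟨c, hcR, hcX⟩ := hfree ψ fun x hx hxv =>
    reserve_subset x (hψL x ⟨h.boundary_subset hx, hxv⟩)
  have hc (x : V) (hx : x ∈ W) (hvx : G.Adj v x) : ψ x ≠ c := by
    by_cases hxX : x ∈ X
    · exact hcX x hxX hvx
    · have hmem := hψL x ⟨hx, hvx.ne'⟩
      rw [reserve, if_pos ⟨hvx, hxX⟩, Finset.mem_sdiff] at hmem
      exact (ne_of_mem_of_not_mem hcR hmem.2).symm
  refine ⟨Function.update ψ v c, fun x hx => ?_, fun x hx y hy hxy => ?_⟩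
  · rcases eq_or_ne x v with rfl | hxv
    · simpa using hRL hcR
    · rw [Function.update_of_ne hxv]
      exact reserve_subset x (hψL x ⟨hx, hxv⟩)
  · rcases eq_or_ne x v with rfl | hxv
    · rw [Function.update_self, Function.update_of_ne hxy.ne']
      exact (hc y hy hxy).symm
    · rw [Function.update_of_ne hxv]
      rcases eq_or_ne y v with rfl | hyv
      · simpa using hc x hx hxy.symm
      · rw [Function.update_of_ne hyv]
        exact hψ x ⟨hx, hxv⟩ y ⟨hy, hyv⟩ hxy

end ApexCanvas

/-- `A` and `B` cover `W`, meet in the two ends of the chord `vw` only, and no edge runs between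
their remaining parts. -/
structure IsChordSeparation (G : SimpleGraph V) (W A B : Set V) (v w : V) : Prop where
  union_eq : A ∪ B = W
  inter_eq : A ∩ B = {v, w}
  adj : G.Adj v w
  left_nonempty : (A \ B).Nonempty
  right_nonempty : (B \ A).Nonempty
  not_adj : ∀ x ∈ A \ B, ∀ y ∈ B \ A, ¬G.Adj x y

namespace IsChordSeparation

variable {A B : Set V} {w : V}

protected theorem symm (h : IsChordSeparation G W A B v w) : IsChordSeparation G W B A v w where
  union_eq := union_comm A B ▸ h.union_eq
  inter_eq := inter_comm A B ▸ h.inter_eq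
  adj := h.adj
  left_nonempty := h.right_nonempty
  right_nonempty := h.left_nonempty
  not_adj x hx y hy hxy := h.not_adj y hy x hx hxy.symm

theorem left_ssubset (h : IsChordSeparation G W A B v w) : A ⊂ W := by
  obtain ⟨y, hyB, hyA⟩ := h.right_nonempty
  exact h.union_eq ▸ ssubset_iff_subset_ne.2
    ⟨subset_union_left, fun hA => hyA (hA ▸ mem_union_right A hyB)⟩

theorem mem_left (h : IsChordSeparation G W A B v w) {x : V} (hx : x = v ∨ x = w) : x ∈ A :=
  (h.inter_eq.symm.subset hx).1

theorem eq_or_eq (h : IsChordSeparation G W A B v w) {x : V} (hA : x ∈ A) (hB : x ∈ B) :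
    x = v ∨ x = w := h.inter_eq.subset ⟨hA, hB⟩

theorem mem_right_of_adj (h : IsChordSeparation G W A B v w) {x y : V} (hxy : G.Adj x y)
    (hx : x ∈ A) (hy : y ∈ B) (hyA : y ∉ A) : x ∈ B := by
  by_contra hxB
  exact h.not_adj x ⟨hx, hxB⟩ y ⟨hy, hyA⟩ hxy

theorem subset_or_subset_of_isClique (h : IsChordSeparation G W A B v w) (hP : G.IsClique P)
    (hPW : P ⊆ W) : P ⊆ A ∨ P ⊆ B := by
  by_contra! hnot
  obtain ⟨⟨p, hp, hpA⟩, q, hq, hqB⟩ := hnot.imp not_subset.1 not_subset.1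
  have hmem {x : V} (hx : x ∈ P) : x ∈ A ∪ B := h.union_eq.symm ▸ hPW hx
  have hqA := (hmem hq).resolve_right hqB
  exact h.not_adj q ⟨hqA, hqB⟩ p ⟨(hmem hp).resolve_left hpA, hpA⟩
    (hP hq hp (ne_of_mem_of_not_mem hqA hpA))

theorem listColorableOn (h : IsChordSeparation G W A B v w) {ψ : V → α}
    (hψL : ∀ x ∈ A, ψ x ∈ L x) (hψ : ∀ x ∈ A, ∀ y ∈ A, G.Adj x y → ψ x ≠ ψ y)
    {L' : V → Finset α} (hL' : ∀ x ∈ B, x ∉ A → L' x ⊆ L x) (hv : L' v = {ψ v})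
    (hw : L' w = {ψ w}) (hB : ListColorableOn G B L') : ListColorableOn G W L := by
  classical
  obtain ⟨χ, hχL, hχ⟩ := hB
  have hagree (x : V) (hxA : x ∈ A) (hxB : x ∈ B) : χ x = ψ x := by
    have hx := hχL x hxB
    rcases h.eq_or_eq hxA hxB with rfl | rfl
    · simpa [hv] using hx
    · simpa [hw] using hx
  have hBmem {x : V} (hx : x ∈ W) (hxA : x ∉ A) : x ∈ B :=
    (h.union_eq.symm ▸ hx : x ∈ A ∪ B).resolve_left hxA
  have hcross {x y : V} (hxy : G.Adj x y) (hx : x ∈ A) (hy : y ∈ W) (hyA : y ∉ A) :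
      ψ x ≠ χ y := by
    have hyB := hBmem hy hyA
    have hxB := h.mem_right_of_adj hxy hx hyB hyA
    exact hagree x hx hxB ▸ hχ x hxB y hyB hxy
  refine ⟨fun x => if x ∈ A then ψ x else χ x, fun x hx => ?_, fun x hx y hy hxy => ?_⟩
  · by_cases hxA : x ∈ A
    · simpa only [if_pos hxA] using hψL x hxA
    · simpa only [if_neg hxA] using hL' x (hBmem hx hxA) hxA (hχL x (hBmem hx hxA))
  · by_cases hxA : x ∈ A <;> by_cases hyA : y ∈ A <;> simp only [hxA, hyA, if_true, if_false]
    · exact hψ x hxA y hyA hxy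
    · exact hcross hxy hxA hy hyA
    · exact (hcross hxy.symm hyA hx hxA).symm
    · exact hχ x (hBmem hx hxA) y (hBmem hy hyA) hxy

end IsChordSeparation

namespace ApexCanvas

variable {A B : Set V} {w : V}

theorem restrict (h : ApexCanvas G W X P L) (hA : A ⊆ W) (hPA : P ⊆ A) :
    ApexCanvas G A (X ∩ A) P L where
  finite := h.finite.subset hA
  boundary_subset := inter_subset_right
  precolored_subset := subset_inter h.precolored_subset hPA
  linked :=
    let ⟨s, hs⟩ := h.linked
    ⟨s, fun x hx => (hs x hx.1).mono (insert_subset_insert (compl_subset_compl.2 hA))⟩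
  isClique := h.isClique
  card_eq_one := h.card_eq_one
  pairwiseDisjoint := h.pairwiseDisjoint
  three_le_card x hx := h.three_le_card x hx.1
  five_le_card x hx hxX := h.five_le_card x (hA hx) fun hX => hxX ⟨hX, hx⟩

open Classical in
/-- The lists in which the two ends of a chord `vw` keep only their colors under `ψ`. -/
noncomputable def precolor (L : V → Finset α) (ψ : V → α) (v w x : V) : Finset α :=
  if x ∈ ({v, w} : Set V) then {ψ x} else L x

theorem restrict_precolor (h : ApexCanvas G W X P L) (hsep : IsChordSeparation G W A B v w)
    (hPA : P ⊆ A) (hv : v ∈ X) (hw : w ∈ X) {ψ : V → α} (hψ : ψ v ≠ ψ w) :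
    ApexCanvas G B (X ∩ B) {v, w} (precolor L ψ v w) := by
  have hBW := hsep.symm.left_ssubset.subset
  have hnot {x : V} (hxB : x ∈ B) (hx : x ∉ ({v, w} : Set V)) : x ∉ P := fun hP =>
    hx (hsep.eq_or_eq (hPA hP) hxB)
  have hends {x : V} (hx : x ∈ ({v, w} : Set V)) : x ∈ X ∩ B :=
    ⟨by rcases hx with rfl | rfl <;> assumption, hsep.symm.mem_left hx⟩
  exact {
    finite := h.finite.subset hBW
    boundary_subset := inter_subset_right
    precolored_subset := fun x => hends
    linked :=
      let ⟨s, hs⟩ := h.linked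
      ⟨s, fun x hx => (hs x hx.1).mono (insert_subset_insert (compl_subset_compl.2 hBW))⟩
    isClique := by simp [hsep.adj]
    card_eq_one := fun x hx => by rw [precolor, if_pos hx, Finset.card_singleton]
    pairwiseDisjoint := by
      rintro x (rfl | rfl) y (rfl | rfl) hxy <;> simp_all [Function.onFun, precolor, hψ.symm]
    three_le_card := fun x hx hxvw => by
      rw [precolor, if_neg hxvw]
      exact h.three_le_card x hx.1 (hnot hx.2 hxvw)
    five_le_card := fun x hx hxX => by
      rw [precolor, if_neg fun hxvw => hxX (hends hxvw)]
      exact h.five_le_card x (hBW hx) fun hX => hxX ⟨hX, hx⟩ }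

theorem listColorableOn_of_isChordSeparation (h : ApexCanvas G W X P L)
    (ih : SmallerCanvasesColorable G α W) (hsep : IsChordSeparation G W A B v w) (hv : v ∈ X)
    (hw : w ∈ X) : ListColorableOn G W L := by
  wlog hPA : P ⊆ A generalizing A B
  · have hPB := hsep.subset_or_subset_of_isClique h.isClique h.precolored_subset_verts
    exact this hsep.symm (hPB.resolve_left hPA)
  obtain ⟨ψ, hψL, hψ⟩ := ih hsep.left_ssubset (h.restrict hsep.left_ssubset.subset hPA)
  have hvw := hψ v (hsep.mem_left (.inl rfl)) w (hsep.mem_left (.inr rfl)) hsep.adj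
  refine hsep.listColorableOn hψL hψ (fun x _ hxA => ?_) (by simp [precolor])
    (by simp [precolor]) (ih hsep.symm.left_ssubset (h.restrict_precolor hsep hPA hv hw hvw))
  have hx : x ∉ ({v, w} : Set V) := fun hx => hxA (hsep.mem_left hx)
  rw [precolor, if_neg hx]

theorem listColorableOn_of_not_linkedIn (h : ApexCanvas G W X P L)
    (ih : SmallerCanvasesColorable G α W) (hv : v ∈ X) (hw : w ∈ X) (hvw : G.Adj v w) {a b : V}
    (ha : a ∈ W \ {v, w}) (hb : b ∈ W \ {v, w}) (hab : ¬LinkedIn G (W \ {v, w}) a b) :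
    ListColorableOn G W L := by
  let K : Set V := {x | LinkedIn G (W \ {v, w}) a x}
  have hKW : K ⊆ W \ {v, w} := fun x hx => hx.right_mem
  have hends : {v, w} ⊆ W :=
    (insert_subset hv (singleton_subset_iff.2 hw)).trans h.boundary_subset
  refine h.listColorableOn_of_isChordSeparation (A := K ∪ {v, w}) (B := W \ K) ih {
    union_eq := ?_
    inter_eq := ?_
    adj := hvw
    left_nonempty := ⟨a, .inl (.refl ha), fun hK => hK.2 (.refl ha)⟩
    right_nonempty := ⟨b, ⟨hb.1, hab⟩, fun hK => hK.elim hab hb.2⟩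
    not_adj := fun x hx y hy hxy => hy.2 (.inl ?_) } hv hw
  · rw [union_right_comm, union_sdiff_cancel (hKW.trans sdiff_subset), union_eq_left.2 hends]
  · rw [union_inter_distrib_right, inter_sdiff_self, empty_union, inter_eq_left]
    exact fun x hx => ⟨hends hx, fun hK => (hKW hK).2 hx⟩
  · have hxK : x ∈ K := hx.1.resolve_right fun hxvw => hx.2 ⟨hends hxvw, fun hK => (hKW hK).2 hxvw⟩
    exact hxK.trans (.of_adj hxy (hKW hxK) ⟨hy.1.1, fun hyvw => hy.2 (.inr hyvw)⟩)

-- The fifth branch vertex is the apex, to which everything outside `W` contracts.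
theorem nonempty_weakK5 (h : ApexCanvas G W X P L) {p y z : V} (hv : v ∈ X) (hp : p ∈ X)
    (hy : y ∈ X) (hz : z ∈ X) (hvp : G.Adj v p) (hvy : G.Adj v y) (hvz : G.Adj v z)
    (hpy : LinkedIn G (W \ {v, z}) p y) (hpz : LinkedIn G (W \ {v, y}) p z)
    (hyz : LinkedIn G (W \ {v, p}) y z) : Nonempty (WeakK5 G) := by
  obtain ⟨s, hs⟩ := h.linked
  have hchord (x : V) (hvx : G.Adj v x) : LinkedIn G {v, x} v x := .of_adj hvx (by simp) (by simp)
  have hW : v ∈ W ∧ p ∈ W ∧ y ∈ W ∧ z ∈ W :=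
    ⟨h.boundary_subset hv, h.boundary_subset hp, h.boundary_subset hy, h.boundary_subset hz⟩
  have hne : v ≠ p ∧ v ≠ y ∧ v ≠ z := ⟨hvp.ne, hvy.ne, hvz.ne⟩
  have hpyz : p ≠ y ∧ p ≠ z ∧ y ≠ z := by
    have hpyL := hpy.left_mem.2
    have hpzL := hpz.left_mem.2
    have hpyR := hpy.right_mem.2
    simp only [mem_insert_iff, mem_singleton_iff, not_or] at hpyL hpzL hpyR
    exact ⟨hpzL.2, hpyL.2, hpyR.2⟩
  refine ⟨{
    branch := ![s, v, p, y, z]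
    link := ![![∅, insert v Wᶜ, insert p Wᶜ, insert y Wᶜ, insert z Wᶜ],
      ![∅, ∅, {v, p}, {v, y}, {v, z}], ![∅, ∅, ∅, W \ {v, z}, W \ {v, y}],
      ![∅, ∅, ∅, ∅, W \ {v, p}], ![∅, ∅, ∅, ∅, ∅]]
    linked := ?_
    disjoint := ?_ }⟩
  · simp [Fin.forall_fin_succ, (hs v hv).symm, (hs p hp).symm, (hs y hy).symm, (hs z hz).symm, *]
  · have hapex (A : Set V) : Disjoint Wᶜ (W \ A) := disjoint_compl_left.mono_right sdiff_subset
    simp [Fin.forall_fin_succ, hapex, hW, hne, hpyz, hne.1.symm, hne.2.1.symm, hne.2.2.symm,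
      hpyz.1.symm, hpyz.2.1.symm, hpyz.2.2.symm]

theorem listColorableOn_of_three_adj [IsEmpty (WeakK5 G)] (h : ApexCanvas G W X P L)
    (ih : SmallerCanvasesColorable G α W) {p y z : V} (hv : v ∈ X) (hp : p ∈ X) (hy : y ∈ X)
    (hz : z ∈ X) (hvp : G.Adj v p) (hvy : G.Adj v y) (hvz : G.Adj v z) (hpy : p ≠ y)
    (hpz : p ≠ z) (hyz : y ≠ z) : ListColorableOn G W L := by
  have hmem {a w : V} (ha : a ∈ X) (hva : G.Adj v a) (haw : a ≠ w) : a ∈ W \ {v, w} :=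
    ⟨h.boundary_subset ha, by simp [hva.ne', haw]⟩
  by_cases hlpy : LinkedIn G (W \ {v, z}) p y
  swap
  · exact h.listColorableOn_of_not_linkedIn ih hv hz hvz (hmem hp hvp hpz) (hmem hy hvy hyz) hlpy
  by_cases hlpz : LinkedIn G (W \ {v, y}) p z
  swap
  · exact h.listColorableOn_of_not_linkedIn ih hv hy hvy (hmem hp hvp hpy)
      (hmem hz hvz hyz.symm) hlpz
  by_cases hlyz : LinkedIn G (W \ {v, p}) y z
  swap
  · exact h.listColorableOn_of_not_linkedIn ih hv hp hvp (hmem hy hvy hpy.symm)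
      (hmem hz hvz hpz.symm) hlyz
  obtain ⟨M⟩ := h.nonempty_weakK5 hv hp hy hz hvp hvy hvz hlpy hlpz hlyz
  exact isEmptyElim M

theorem listColorableOn_of_adj_subset_precolored (h : ApexCanvas G W X P L)
    (ih : SmallerCanvasesColorable G α W) {p : V} (hp : p ∈ P)
    (hadj : ∀ x ∈ X, G.Adj p x → x ∈ P) : ListColorableOn G W L := by
  obtain ⟨c, hc⟩ := Finset.card_eq_one.1 (h.card_eq_one p hp)
  refine h.listColorableOn_of_delete ih (h.precolored_subset hp) (R := L p) (by simp [hc])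
    subset_rfl fun ψ hψ => ⟨c, by simp [hc], fun x hx hpx => ?_⟩
  have hdisj := h.pairwiseDisjoint hp (hadj x hx hpx) hpx.ne
  exact (ne_of_mem_of_not_mem (hc ▸ Finset.mem_singleton_self c)
    (Finset.disjoint_right.1 hdisj (hψ x hx hpx.ne'))).symm

-- Two colors outside `L p` are reserved for `v`; at least one survives the coloring of `y`.
theorem listColorableOn_of_adj_eq_or_eq (h : ApexCanvas G W X P L)
    (ih : SmallerCanvasesColorable G α W) {p y : V} (hv : v ∈ X) (hvP : v ∉ P) (hp : p ∈ P)
    (hadj : ∀ x ∈ X, G.Adj v x → x = p ∨ x = y) : ListColorableOn G W L := by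
  classical
  have hcard : 2 ≤ (L v \ L p).card := by
    have hthree := h.three_le_card v hv hvP
    have hsdiff := Finset.le_card_sdiff (L p) (L v)
    rw [h.card_eq_one p hp] at hsdiff
    omega
  obtain ⟨R, hR, hRcard⟩ := Finset.exists_subset_card_eq hcard
  refine h.listColorableOn_of_delete ih hv hRcard.le (hR.trans Finset.sdiff_subset) fun ψ hψ => ?_
  obtain ⟨c, hcR, hcy⟩ := Finset.exists_mem_ne (by omega : 1 < R.card) (ψ y)
  refine ⟨c, hcR, fun x hx hvx => ?_⟩
  rcases hadj x hx hvx with rfl | rfl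
  · exact ne_of_mem_of_not_mem (hψ x hx hvx.ne') (Finset.mem_sdiff.1 (hR hcR)).2
  · exact hcy.symm

theorem listColorableOn_of_smallerCanvasesColorable [IsEmpty (WeakK5 G)]
    (h : ApexCanvas G W X P L) (ih : SmallerCanvasesColorable G α W) (hP : P.Nonempty) :
    ListColorableOn G W L := by
  obtain ⟨p, hp⟩ := hP
  by_cases hadj : ∀ x ∈ X, G.Adj p x → x ∈ P
  · exact h.listColorableOn_of_adj_subset_precolored ih hp hadj
  push Not at hadj
  obtain ⟨v, hv, hpv, hvP⟩ := hadj
  by_cases hy : ∃ y ∈ X, G.Adj v y ∧ y ≠ p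
  swap
  · push Not at hy
    exact h.listColorableOn_of_adj_eq_or_eq (y := p) ih hv hvP hp fun x hx hvx => .inl (hy x hx hvx)
  obtain ⟨y, hy, hvy, hyp⟩ := hy
  by_cases hz : ∃ z ∈ X, G.Adj v z ∧ z ≠ p ∧ z ≠ y
  · obtain ⟨z, hz, hvz, hzp, hzy⟩ := hz
    exact h.listColorableOn_of_three_adj ih hv (h.precolored_subset hp) hy hz hpv.symm hvy hvz
      hyp.symm hzp.symm hzy.symm
  · push Not at hz
    exact h.listColorableOn_of_adj_eq_or_eq ih hv hvP hp fun x hx hvx =>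
      or_iff_not_imp_left.2 (hz x hx hvx)

protected theorem listColorableOn [Nonempty α] [IsEmpty (WeakK5 G)] (h : ApexCanvas G W X P L) :
    ListColorableOn G W L := by
  induction hn : W.ncard using Nat.strong_induction_on generalizing W X P L with
  | _ n ih =>
    have ih' : SmallerCanvasesColorable G α W := fun W' hW' X' P' L' h' =>
      ih _ (hn ▸ ncard_lt_ncard hW' h.finite) h' rfl
    rcases W.eq_empty_or_nonempty with rfl | hW
    · exact ⟨fun _ => Classical.arbitrary α, by simp, by simp⟩
    · obtain ⟨X', P', L', h', hP', hL'⟩ := h.exists_nonempty_precolored hW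
      exact (h'.listColorableOn_of_smallerCanvasesColorable ih' hP').mono fun x _ => hL' x

end ApexCanvas

end ApexCanvases

section OuterFace

theorem isPreconnected_compl_closedBall {E : Type*} [NormedAddCommGroup E] [NormedSpace ℝ E]
    (hE : 1 < Module.rank ℝ E) (x : E) {r : ℝ} (hr : 0 ≤ r) :
    IsPreconnected (Metric.closedBall x r)ᶜ := by
  have hpolar : (Metric.closedBall x r)ᶜ =
      (fun q : E × ℝ => x + q.2 • q.1) '' Metric.sphere 0 1 ×ˢ Ioi r := by
    ext y
    simp only [mem_compl_iff, Metric.mem_closedBall, dist_eq_norm, not_le, mem_image, mem_prod,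
      mem_sphere_iff_norm, sub_zero, mem_Ioi, Prod.exists]
    constructor
    · intro hy
      have hy0 : ‖y - x‖ ≠ 0 := (hr.trans_lt hy).ne'
      exact ⟨‖y - x‖⁻¹ • (y - x), ‖y - x‖, ⟨by simp [norm_smul, hy0], hy⟩, by simp [hy0]⟩
    · rintro ⟨u, t, ⟨hu, ht⟩, rfl⟩
      simpa [norm_smul, hu] using ht.trans_le (le_abs_self t)
  rw [hpolar]
  exact ((isPreconnected_sphere hE 0 1).prod isPreconnected_Ioi).image _ (by fun_prop)

namespace PlaneGraph

variable {V : Type u} {G : PlaneGraph V}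

theorem isCompact_arc {u v : V} (h : G.Adj u v) : IsCompact (G.arc s(u, v)) := by
  obtain ⟨f, hf, -, him, -, -⟩ := G.arc_arc u v h
  exact him ▸ isCompact_Icc.image_of_continuousOn hf

theorem isCompact_biUnion_arc {S : Set (V × V)} (hS : ∀ e ∈ S, G.Adj e.1 e.2) :
    IsCompact (⋃ e ∈ S, G.arc s(e.1, e.2)) := by
  have hfin : S.Finite := (G.finite_verts.prod G.finite_verts).subset fun e he =>
    ⟨G.adj_mem _ _ (hS e he), G.adj_mem _ _ (G.adj_symm _ _ (hS e he))⟩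
  exact hfin.isCompact_biUnion fun e he => isCompact_arc (hS e he)

theorem isCompact_image : IsCompact G.image := by
  have harcs : IsCompact (⋃ e ∈ {e : V × V | G.Adj e.1 e.2}, G.arc s(e.1, e.2)) :=
    isCompact_biUnion_arc fun _ he => he
  have himage : G.image =
      G.pos '' G.verts ∪ ⋃ e ∈ {e : V × V | G.Adj e.1 e.2}, G.arc s(e.1, e.2) := by
    ext
    simp [image]
  exact himage ▸ (G.finite_verts.image _).isCompact.union harcs

theorem arc_subset_image {u v : V} (h : G.Adj u v) : G.arc s(u, v) ⊆ G.image :=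
  fun _ hp => .inr (mem_iUnion₂.2 ⟨u, v, mem_iUnion.2 ⟨h, hp⟩⟩)

theorem joinedIn_arc {u v : V} (h : G.Adj u v) :
    JoinedIn (G.arc s(u, v)) (G.pos u) (G.pos v) := by
  obtain ⟨f, hf, -, him, h0, h1⟩ := G.arc_arc u v h
  exact .ofLine hf h0 h1 him.subset

theorem disjoint_arc {u v x y : V} (huv : G.Adj u v) (hxy : G.Adj x y) (hux : u ≠ x)
    (huy : u ≠ y) (hvx : v ≠ x) (hvy : v ≠ y) : Disjoint (G.arc s(u, v)) (G.arc s(x, y)) := by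
  rw [Set.disjoint_iff]
  intro p hp
  obtain ⟨w, ⟨hw, hw'⟩, -⟩ := G.arc_meet u v x y huv hxy (by simp [hux, huy]) hp
  rcases hw with rfl | rfl
  · exact hw'.elim hux huy
  · exact hw'.elim hvx hvy

theorem connectedComponentIn_subset_outerFace {p : ℝ × ℝ} (hp : p ∈ G.outerFace) :
    connectedComponentIn G.imageᶜ p ⊆ G.outerFace := fun _ hq =>
  ⟨connectedComponentIn_subset _ _ hq, connectedComponentIn_eq hq ▸ hp.2⟩

theorem connectedComponentIn_eq_of_mem_outerFace {p q : ℝ × ℝ} (hp : p ∈ G.outerFace)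
    (hq : q ∈ G.outerFace) :
    connectedComponentIn G.imageᶜ p = connectedComponentIn G.imageᶜ q := by
  obtain ⟨r, hr0, hr⟩ := G.isCompact_image.isBounded.subset_closedBall_lt 0 0
  have hfar (p : ℝ × ℝ) (hp : p ∈ G.outerFace) : ∃ x ∉ Metric.closedBall 0 r,
      connectedComponentIn G.imageᶜ p = connectedComponentIn G.imageᶜ x := by
    obtain ⟨x, hx, hxr⟩ := not_subset.1 fun h => hp.2 (Metric.isBounded_closedBall.subset h)
    exact ⟨x, hxr, connectedComponentIn_eq hx⟩
  obtain ⟨x, hx, hpx⟩ := hfar p hp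
  obtain ⟨y, hy, hqy⟩ := hfar q hq
  have hrank : 1 < Module.rank ℝ (ℝ × ℝ) := by simp [← Module.finrank_eq_rank]
  have hxy : y ∈ connectedComponentIn G.imageᶜ x :=
    (isPreconnected_compl_closedBall hrank 0 hr0.le).subset_connectedComponentIn hx
      (compl_subset_compl.2 hr) hy
  rw [hpx, hqy, connectedComponentIn_eq hxy]

theorem joinedIn_outerFace {p q : ℝ × ℝ} (hp : p ∈ G.outerFace) (hq : q ∈ G.outerFace) :
    JoinedIn G.outerFace p q := by
  have hpath : IsPathConnected (connectedComponentIn G.imageᶜ p) :=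
    (G.isCompact_image.isClosed.isOpen_compl.connectedComponentIn).isConnected_iff_isPathConnected.1
      (isConnected_connectedComponentIn_iff.2 hp.1)
  refine (hpath.joinedIn p (mem_connectedComponentIn hp.1) q ?_).mono
    (connectedComponentIn_subset_outerFace hp)
  rw [connectedComponentIn_eq_of_mem_outerFace hp hq]
  exact mem_connectedComponentIn hq.1

theorem exists_ball_disjoint_arc {x : V} (hx : x ∈ G.verts) : ∃ ε > 0, ∀ u v, G.Adj u v →
    x ≠ u → x ≠ v → Disjoint (Metric.ball (G.pos x) ε) (G.arc s(u, v)) := by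
  let S : Set (V × V) := {e | G.Adj e.1 e.2 ∧ x ≠ e.1 ∧ x ≠ e.2}
  have hopen : IsOpen (⋃ e ∈ S, G.arc s(e.1, e.2))ᶜ :=
    (isCompact_biUnion_arc fun _ he => he.1).isClosed.isOpen_compl
  have hmem : G.pos x ∈ (⋃ e ∈ S, G.arc s(e.1, e.2))ᶜ := by
    simp only [mem_compl_iff, mem_iUnion, not_exists]
    rintro e ⟨he, hxu, hxv⟩ hpos
    exact (G.arc_avoid e.1 e.2 he x hx hpos).elim hxu hxv
  obtain ⟨ε, hε, hball⟩ := Metric.isOpen_iff.1 hopen _ hmem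
  refine ⟨ε, hε, fun u v huv hxu hxv => (disjoint_compl_left.mono_left hball).mono_right ?_⟩
  exact subset_biUnion_of_mem (u := fun e : V × V => G.arc s(e.1, e.2)) (x := (u, v))
    ⟨huv, hxu, hxv⟩

/-- The abstract graph of `G` together with a new vertex `none`, the apex, adjacent to all vertices
on the boundary of the outer face. -/
def withApex (G : PlaneGraph V) : SimpleGraph (Option V) where
  Adj
    | none, none => False
    | none, some v => v ∈ G.boundaryVerts
    | some v, none => v ∈ G.boundaryVerts
    | some u, some v => G.Adj u v
  symm := ⟨by
    rintro (_ | u) (_ | v) h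
    exacts [h, h, h, G.adj_symm u v h]⟩
  loopless := ⟨by
    rintro (_ | v) h
    exacts [h, G.adj_irrefl v h]⟩

/-- The set drawn for the edge from the apex to a boundary vertex `x`: the outer face and a disc
around `x`. -/
def spoke (G : PlaneGraph V) (ε : V → ℝ) (x : V) : Set (ℝ × ℝ) :=
  G.outerFace ∪ Metric.ball (G.pos x) (ε x)

theorem joinedIn_spoke {ε : V → ℝ} {x : V} (hx : G.OnOuter x) (hε : 0 < ε x) {o : ℝ × ℝ}
    (ho : o ∈ G.outerFace) : JoinedIn (G.spoke ε x) o (G.pos x) := by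
  obtain ⟨u, hu, hux⟩ := Metric.mem_closure_iff.1 (frontier_subset_closure hx) (ε x) hε
  have hball : JoinedIn (Metric.ball (G.pos x) (ε x)) u (G.pos x) :=
    (Metric.isPathConnected_ball hε).joinedIn u (Metric.mem_ball'.2 hux) _
      (Metric.mem_ball_self hε)
  exact ((joinedIn_outerFace ho hu).mono subset_union_left).trans (hball.mono subset_union_right)

theorem disjoint_spoke_arc {ε : V → ℝ} {x u v : V} (huv : G.Adj u v)
    (hε : Disjoint (Metric.ball (G.pos x) (ε x)) (G.arc s(u, v))) :
    Disjoint (G.spoke ε x) (G.arc s(u, v)) :=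
  (disjoint_left.2 fun _ hp hp' => hp.1 (arc_subset_image huv hp')).union_left hε

theorem nonempty_weakDrawing_withApex (G : PlaneGraph V) :
    Nonempty (WeakDrawing G.withApex (ℝ × ℝ)) := by
  have hε (x : V) : ∃ ε > 0, x ∈ G.verts → ∀ u v, G.Adj u v → x ≠ u → x ≠ v →
      Disjoint (Metric.ball (G.pos x) ε) (G.arc s(u, v)) := by
    by_cases hx : x ∈ G.verts
    · simpa only [hx, forall_const] using exists_ball_disjoint_arc hx
    · exact ⟨1, one_pos, fun h => absurd h hx⟩
  choose ε hε hball using hε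
  have ho : ∃ o, ∀ x ∈ G.boundaryVerts, o ∈ G.outerFace := by
    rcases G.outerFace.eq_empty_or_nonempty with hempty | ⟨o, ho⟩
    · exact ⟨0, fun x hx => by simpa [OnOuter, hempty] using hx.2⟩
    · exact ⟨o, fun _ _ => ho⟩
  obtain ⟨o, ho⟩ := ho
  have hspoke {x u v : V} (hx : x ∈ G.boundaryVerts) (huv : G.Adj u v) (hxu : some x ≠ some u)
      (hxv : some x ≠ some v) : Disjoint (G.spoke ε x) (G.arc s(u, v)) :=
    disjoint_spoke_arc huv
      (hball x hx.1 u v huv (ne_of_apply_ne some hxu) (ne_of_apply_ne some hxv))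
  refine ⟨{
    pos := fun x => x.elim o G.pos
    arc
      | none, none => ∅
      | none, some x => G.spoke ε x
      | some x, none => G.spoke ε x
      | some u, some v => G.arc s(u, v)
    joined := @fun
      | none, none, h => h.elim
      | none, some x, h => joinedIn_spoke h.2 (hε x) (ho x h)
      | some x, none, h => (joinedIn_spoke h.2 (hε x) (ho x h)).symm
      | some u, some v, h => joinedIn_arc h
    disjoint := @fun a b c d hab hcd hac had hbc hbd => ?_ }⟩
  match a, b, c, d with
  | some u, some v, some x, some y =>
    exact disjoint_arc hab hcd (ne_of_apply_ne some hac) (ne_of_apply_ne some had)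
      (ne_of_apply_ne some hbc) (ne_of_apply_ne some hbd)
  | none, some x, some u, some v => exact hspoke hab hcd hbc hbd
  | some x, none, some u, some v => exact hspoke hab hcd hac had
  | some u, some v, none, some x => exact (hspoke hcd hab had.symm hbd.symm).symm
  | some u, some v, some x, none => exact (hspoke hcd hab hac.symm hbc.symm).symm
  | none, none, _, _ => exact hab.elim
  | _, _, none, none => exact hcd.elim
  | none, _, none, _ => exact absurd rfl hac
  | none, _, _, none => exact absurd rfl had
  | _, none, none, _ => exact absurd rfl hbc
  | _, none, _, none => exact absurd rfl hbd

instance isEmpty_weakK5_withApex (G : PlaneGraph V) : IsEmpty (WeakK5 G.withApex) := by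
  obtain ⟨D⟩ := G.nonempty_weakDrawing_withApex
  exact (D.map Complex.equivRealProdCLM.symm Complex.equivRealProdCLM.symm.continuous
    Complex.equivRealProdCLM.symm.injective).isEmpty_weakK5

end PlaneGraph

end OuterFace

namespace PlaneGraph

variable {V : Type u} {G : PlaneGraph V} {p1 p2 : V} {L : V → Finset ℕ} {c : ℕ × ℕ}

open Classical in
theorem apexCanvas (hp : G.Adj p1 p2) (hp1 : G.OnOuter p1) (hp2 : G.OnOuter p2)
    (h3 : ∀ v ∈ G.verts, v ∉ ({p1, p2} : Set V) → 3 ≤ (L v).card)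
    (h5 : ∀ v ∈ G.verts, ¬G.OnOuter v → 5 ≤ (L v).card) (hc : c.1 ≠ c.2) :
    ApexCanvas G.withApex (some '' G.verts) (some '' G.boundaryVerts) {some p1, some p2}
      (ApexCanvas.precolor (·.elim ∅ L) (fun x => if x = some p1 then c.1 else c.2)
        (some p1) (some p2)) where
  finite := G.finite_verts.image some
  boundary_subset := image_mono (sep_subset _ _)
  precolored_subset := by
    rintro _ (rfl | rfl)
    · exact mem_image_of_mem some ⟨G.adj_mem _ _ hp, hp1⟩
    · exact mem_image_of_mem some ⟨G.adj_mem _ _ (G.adj_symm _ _ hp), hp2⟩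
  linked := by
    refine ⟨none, ?_⟩
    rintro _ ⟨x, hx, rfl⟩
    exact .of_adj hx (mem_insert _ _) (by simp)
  isClique := SimpleGraph.isClique_pair.2 fun _ => hp
  card_eq_one x hx := by rw [ApexCanvas.precolor, if_pos hx, Finset.card_singleton]
  pairwiseDisjoint := by
    have hne : p2 ≠ p1 := fun h => G.adj_irrefl p1 (h ▸ hp)
    rintro x (rfl | rfl) y (rfl | rfl) hxy <;>
      simp_all [Function.onFun, ApexCanvas.precolor, hc.symm]
  three_le_card := by
    rintro _ ⟨x, hx, rfl⟩ hxP
    rw [ApexCanvas.precolor, if_neg hxP]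
    exact h3 x hx.1 (by simpa using hxP)
  five_le_card := by
    rintro _ ⟨x, hx, rfl⟩ hxX
    have hxouter : ¬G.OnOuter x := fun h => hxX (mem_image_of_mem some ⟨hx, h⟩)
    rw [ApexCanvas.precolor, if_neg]
    · exact h5 x hx hxouter
    · rintro (h | h) <;> cases h <;> contradiction

theorem exists_coloring_extending (hp : G.Adj p1 p2) (hp1 : G.OnOuter p1) (hp2 : G.OnOuter p2)
    (h3 : ∀ v ∈ G.verts, v ∉ ({p1, p2} : Set V) → 3 ≤ (L v).card)
    (h5 : ∀ v ∈ G.verts, ¬G.OnOuter v → 5 ≤ (L v).card) (hc : ProperEdgeColoring L p1 p2 c) :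
    ∃ φ : V → ℕ, (∀ v ∈ G.verts, φ v ∈ L v) ∧ (∀ u v, G.Adj u v → φ u ≠ φ v) ∧
      (φ p1, φ p2) = c := by
  classical
  obtain ⟨hc1, hc2, hc12⟩ := hc
  obtain ⟨ψ, hψL, hψ⟩ := (apexCanvas hp hp1 hp2 h3 h5 hc12).listColorableOn
  have hmem {u v : V} (h : G.Adj u v) : some u ∈ some '' G.verts :=
    mem_image_of_mem some (G.adj_mem u v h)
  have hne : p2 ≠ p1 := fun h => G.adj_irrefl p1 (h ▸ hp)
  have hψ1 : ψ (some p1) = c.1 := by simpa [ApexCanvas.precolor] using hψL _ (hmem hp)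
  have hψ2 : ψ (some p2) = c.2 := by
    simpa [ApexCanvas.precolor, hne] using hψL _ (hmem (G.adj_symm _ _ hp))
  refine ⟨fun v => ψ (some v), fun v hv => ?_, fun u v h => ?_, Prod.ext hψ1 hψ2⟩
  · by_cases hvP : v ∈ ({p1, p2} : Set V)
    · rcases hvP with rfl | rfl
      · simpa only [hψ1] using hc1
      · simpa only [hψ2] using hc2
    · have hv' := hψL _ (mem_image_of_mem some hv)
      rwa [ApexCanvas.precolor, if_neg (by simpa using hvP)] at hv'
  · exact hψ _ (hmem h) _ (hmem (G.adj_symm _ _ h)) h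

end PlaneGraph

theorem phi_nonempty_general {V : Type u} {G : PlaneGraph V} {p1 p2 : V} {L : V → Finset ℕ}
    {C : Set (ℕ × ℕ)} (hp : G.Adj p1 p2) (hp1 : G.OnOuter p1) (hp2 : G.OnOuter p2)
    (h3 : ∀ v ∈ G.verts, v ∉ ({p1, p2} : Set V) → 3 ≤ (L v).card)
    (h5 : ∀ v ∈ G.verts, ¬G.OnOuter v → 5 ≤ (L v).card)
    (hC : ∃ c ∈ C, ProperEdgeColoring L p1 p2 c) (q1 q2 : V) :
    (Phi G L p1 p2 q1 q2 C).Nonempty := by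
  obtain ⟨c, hc, hproper⟩ := hC
  obtain ⟨φ, hφL, hφ, hφc⟩ := G.exists_coloring_extending hp hp1 hp2 h3 h5 hproper
  exact ⟨(φ q1, φ q2), φ, hφL, hφ, hφc ▸ hc, rfl, rfl⟩

/-- Theorem 3.2: let `T = (G, P, L)` be a canvas where
`P = p₁p₂` is a path of length one in the boundary `C` of the outer face of
`G`. If `𝒞` is a non-empty collection of proper `L`-colorings of `P` and
`P' = q₁q₂` is an edge of `G` with both ends in `C`, then `Φ_T(P', 𝒞)` is
non-empty. -/
theorem phi_nonempty {V : Type u} (G : PlaneGraph V) (p1 p2 q1 q2 : V)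
    (L : V → Finset ℕ) (C : Set (ℕ × ℕ))
    (hT : IsPathCanvas G p1 p2 L)
    (hq : G.Adj q1 q2) (hq1 : G.OnOuter q1) (hq2 : G.OnOuter q2)
    (hCne : C.Nonempty)
    (hCproper : ∀ c ∈ C, ProperEdgeColoring L p1 p2 c) :
    (Phi G L p1 p2 q1 q2 C).Nonempty := by
  obtain ⟨-, hcanvas⟩ := hT
  obtain ⟨c, hc⟩ := hCne
  exact phi_nonempty_general (hcanvas.sadj_sub p1 p2 (.inl ⟨rfl, rfl⟩))
    (hcanvas.sverts_outer p1 (.inl rfl)) (hcanvas.sverts_outer p2 (.inr rfl))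
    hcanvas.card_outside_S hcanvas.card_inner ⟨c, hc, hCproper c hc⟩ q1 q2
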